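/- arXiv:1110.0868 — 2 statements merged into one kernel-verified Lean document; each statement's English description precedes it below -/
import Mathlib

section
/- Fix integers j and k with k ≥ 1, and an integer l with |l| ≤ k−1 and l ≡ k−1 (mod 2). Let S = [j+2l−(k−1), j+2l+(k−1)]_2. Then F_{j,k}|_S = 0. -/
/-!
The sum over order ideals is killed by a sign-reversing involution. Call `a` toggleable for an
ideal `I` if all that `a` covers lies in `I` and nothing that covers `a` does, so that `I ∆ {a}`
is again an ideal. The elements of `Q_{k+1}` on the line `r + s = l` all carry variables sent to
`-1`, so it suffices that every ideal has a toggleable element on this line. No element of the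
line covers another, so toggling one of them does not change which of them are toggleable;
choosing the element to toggle as a function of that set alone therefore gives an involution.

For the existence, extend `I` downwards below the bottom of each column of `Q_k`. Two columns over
diagonally adjacent points `(r, s)` then have heights differing by exactly `2`. Walk along the line
`r + s = l` comparing the heights over `(r, s + 1)` and `(r - 1, s)`, which lie on either side of
it. At one end of the line the former is larger, at the other end the latter, and where the
comparison flips there is a toggleable element. In terms of alternating sign matrices, `I ∩ Q_k` is
such a matrix of size `k`, the toggleable elements of `Q_{k+1}` are its entries `1`, and every row
contains one.
-/

open MvPolynomial
open scoped Classical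

noncomputable section

/-- The set `Q_k`: triples `(r,s,t)` with `|r|+|s| ≤ k-2`, `r+s ≡ k (mod 2)`,
`t ≡ 2|s|-k+2 (mod 4)` and `2|s|-k+2 ≤ t ≤ k-2-2|r|`. -/
def pentagramQ (k : ℤ) : Set (ℤ × ℤ × ℤ) :=
  {p | |p.1| + |p.2.1| ≤ k - 2 ∧ (2 : ℤ) ∣ (p.1 + p.2.1 - k) ∧
    (4 : ℤ) ∣ (p.2.2 - (2 * |p.2.1| - k + 2)) ∧
    2 * |p.2.1| - k + 2 ≤ p.2.2 ∧ p.2.2 ≤ k - 2 - 2 * |p.1|}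

/-- The set `P_k = Q_k ∪ Q_{k+1}`. -/
def pentagramP (k : ℤ) : Set (ℤ × ℤ × ℤ) := pentagramQ k ∪ pentagramQ (k + 1)

/-- The covering relation: `(r',s',t')` covers `(r,s,t)` iff `t' = t + 1` and
`|r'-r| + |s'-s| = 1`. -/
def pentagramCovers (x y : ℤ × ℤ × ℤ) : Prop :=
  y.2.2 = x.2.2 + 1 ∧ |y.1 - x.1| + |y.2.1 - x.2.1| = 1

/-- The partial order on `P_k`: the reflexive-transitive closure of the covering
relation within `P_k`. -/
def pentagramLe (k : ℤ) : (ℤ × ℤ × ℤ) → (ℤ × ℤ × ℤ) → Prop :=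
  Relation.ReflTransGen
    (fun x y => x ∈ pentagramP k ∧ y ∈ pentagramP k ∧ pentagramCovers x y)

/-- An order ideal of `P_k`: a downward-closed subset of `P_k`. -/
def IsPentagramOrderIdeal (k : ℤ) (I : Set (ℤ × ℤ × ℤ)) : Prop :=
  I ⊆ pentagramP k ∧ ∀ x y, y ∈ I → pentagramLe k x y → x ∈ I

/-- `P_k` realized as a `Finset` (it is contained in the displayed finite box). -/
def pentagramPFinset (k : ℤ) : Finset (ℤ × ℤ × ℤ) :=
  ((Finset.Icc (-(k-1)) (k-1)) ×ˢ (Finset.Icc (-(k-1)) (k-1)) ×ˢ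
    (Finset.Icc (-(k-1)) (k-1))).filter (fun p => p ∈ pentagramP k)

/-- The F-polynomial `F_{j,k} = Σ_{order ideals I of P_k} Π_{(r,s,t) ∈ I} y_{3r+s+j}`,
as an element of `ℤ[y_i : i ∈ ℤ] = MvPolynomial ℤ ℤ`. -/
def pentagramF (j k : ℤ) : MvPolynomial ℤ ℤ :=
  ∑ I ∈ (pentagramPFinset k).powerset.filter
      (fun I : Finset (ℤ × ℤ × ℤ) => IsPentagramOrderIdeal k (↑I : Set (ℤ × ℤ × ℤ))),
    ∏ p ∈ I, X (3 * p.1 + p.2.1 + j)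

/-- The ring endomorphism of `ℤ[y_i : i ∈ ℤ]` sending `y_i ↦ -1` for `i ∈ S`
and fixing the other variables; `substNeg S F` is `F|_S`. -/
def substNeg (S : Set ℤ) : MvPolynomial ℤ ℤ →+* MvPolynomial ℤ ℤ :=
  (MvPolynomial.aeval
    (fun i : ℤ => if i ∈ S then (-1 : MvPolynomial ℤ ℤ) else X i)).toRingHom

/-- The arithmetic progression `[a,b]_d = {a, a+d, a+2d, …, b}` (as a subset of `ℤ`). -/
def AP (a b d : ℤ) : Set ℤ := {x | a ≤ x ∧ x ≤ b ∧ d ∣ (x - a)}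

section Toggle

variable {α : Type*} {r : α → α → Prop} {a b : α}

/-- `I` is closed under passing to smaller elements, where `r x y` is read as `x` lies below `y`.
No transitivity is assumed, so that `r` can be a covering relation. -/
def IsDownClosed (r : α → α → Prop) (I : Set α) : Prop :=
  ∀ ⦃x y⦄, r x y → y ∈ I → x ∈ I

/-- The element `a` can be added to or removed from a down-closed set `I` without destroying
closedness: everything below `a` lies in `I`, and nothing above `a` does. -/
def IsToggleable (r : α → α → Prop) (I : Set α) (a : α) : Prop :=
  (∀ x, r x a → x ∈ I) ∧ ∀ y, r a y → y ∉ I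

lemma isDownClosed_reflTransGen_iff {I : Set α} :
    IsDownClosed (Relation.ReflTransGen r) I ↔ IsDownClosed r I := by
  refine ⟨fun h x y hxy => h (.single hxy), fun h x y hxy hy => ?_⟩
  induction hxy with
  | refl => exact hy
  | tail _ hbc ih => exact ih (h hbc hy)

lemma mem_symmDiff_singleton_of_ne {I : Set α} (h : b ≠ a) : b ∈ symmDiff I {a} ↔ b ∈ I := by
  simp [Set.mem_symmDiff, h]

lemma IsDownClosed.symmDiff_singleton {I : Set α} (hI : IsDownClosed r I)
    (ha : IsToggleable r I a) : IsDownClosed r (symmDiff I {a}) := by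
  intro x y hxy hy
  have hyI_of_ne : y ≠ a → y ∈ I := fun h => (mem_symmDiff_singleton_of_ne h).1 hy
  have hx_ne : x ≠ a := by
    rintro rfl
    have hya : y = x := by_contra fun h => ha.2 y hxy (hyI_of_ne h)
    subst hya
    exact ha.2 y hxy (ha.1 y hxy)
  rw [mem_symmDiff_singleton_of_ne hx_ne]
  by_cases hya : y = a
  · exact ha.1 x (hya ▸ hxy)
  · exact hI hxy (hyI_of_ne hya)

lemma isToggleable_symmDiff_singleton_iff {I : Set α} (hab : ¬ r a b) (hba : ¬ r b a) :
    IsToggleable r (symmDiff I {a}) b ↔ IsToggleable r I b := by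
  have hbelow : ∀ x, r x b → (x ∈ symmDiff I {a} ↔ x ∈ I) := fun x hx =>
    mem_symmDiff_singleton_of_ne (by rintro rfl; exact hab hx)
  have habove : ∀ y, r b y → (y ∈ symmDiff I {a} ↔ y ∈ I) := fun y hy =>
    mem_symmDiff_singleton_of_ne (by rintro rfl; exact hba hy)
  exact and_congr (forall₂_congr hbelow) (forall₂_congr fun y hy => not_congr (habove y hy))

lemma prod_symmDiff_singleton_of_eq_neg_one {R : Type*} [CommRing R] {w : α → R}
    (ha : w a = -1) (I : Finset α) : ∏ x ∈ symmDiff I {a}, w x = -∏ x ∈ I, w x := by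
  by_cases haI : a ∈ I
  · have h : symmDiff I {a} = I.erase a := by
      ext x; by_cases hx : x = a <;> simp [Finset.mem_symmDiff, hx, haI]
    rw [h, ← Finset.mul_prod_erase I w haI, ha]
    ring
  · have h : symmDiff I {a} = insert a I := by
      ext x; by_cases hx : x = a <;> simp [Finset.mem_symmDiff, hx, haI]
    rw [h, Finset.prod_insert haI, ha]
    ring

theorem sum_isDownClosed_prod_eq_zero {R : Type*} [CommRing R] {w : α → R} {P : Finset α}
    {A : Set α} (hAP : A ⊆ P) (hA : ∀ a ∈ A, ∀ b ∈ A, ¬ r a b) (hw : ∀ a ∈ A, w a = -1)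
    (hex : ∀ I : Set α, I ⊆ P → IsDownClosed r I → ∃ a ∈ A, IsToggleable r I a) :
    ∑ I ∈ P.powerset.filter (fun I : Finset α => IsDownClosed r (I : Set α)), ∏ x ∈ I, w x = 0 := by
  have : Nonempty α :=
    let ⟨a, _⟩ := hex ∅ (Set.empty_subset _) fun _ _ _ h => h
    ⟨a⟩
  choose! pick pick_mem using fun (T : Set α) (hT : T.Nonempty) => hT
  let toggleables (I : Finset α) : Set α := {a ∈ A | IsToggleable r (I : Set α) a}
  let toggle (I : Finset α) : Finset α := symmDiff I {pick (toggleables I)}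
  have pick_mem_toggleables {I : Finset α}
      (hI : I ∈ P.powerset.filter fun I : Finset α => IsDownClosed r (I : Set α)) :
      pick (toggleables I) ∈ toggleables I := by
    obtain ⟨hIP, hI⟩ := Finset.mem_filter.1 hI
    exact pick_mem _ (hex I (Finset.coe_subset.2 (Finset.mem_powerset.1 hIP)) hI)
  have toggleables_symmDiff {I : Finset α} {a : α} (ha : a ∈ A) :
      toggleables (symmDiff I {a}) = toggleables I := by
    ext b
    refine and_congr_right fun hb => ?_
    rw [Finset.coe_symmDiff, Finset.coe_singleton]
    exact isToggleable_symmDiff_singleton_iff (hA a ha b hb) (hA b hb a ha)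
  refine Finset.sum_involution (fun I _ => toggle I) (fun I hI => ?_) (fun I _ _ => ?_)
    (fun I hI => ?_) (fun I hI => ?_)
  · rw [prod_symmDiff_singleton_of_eq_neg_one (hw _ (pick_mem_toggleables hI).1), add_neg_cancel]
  · exact fun h => Finset.singleton_ne_empty _ (symmDiff_eq_left.1 h)
  · obtain ⟨hpickA, hpick⟩ := pick_mem_toggleables hI
    obtain ⟨hIP, hI⟩ := Finset.mem_filter.1 hI
    refine Finset.mem_filter.2 ⟨Finset.mem_powerset.2 ?_, ?_⟩
    · exact symmDiff_le_sup.trans <| Finset.union_subset (Finset.mem_powerset.1 hIP)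
        (Finset.singleton_subset_iff.2 (hAP hpickA))
    · rw [Finset.coe_symmDiff, Finset.coe_singleton]
      exact hI.symmDiff_singleton hpick
  · simp only [toggle, toggleables_symmDiff (pick_mem_toggleables hI).1,
      symmDiff_symmDiff_cancel_right]

end Toggle

section PentagramPoset

variable {k r s t r' s' t' : ℤ} {I : Set (ℤ × ℤ × ℤ)}

-- As `|s|` and `s` have the same parity, the residue of `t` mod `4` does not see the absolute
-- value, and the bounds on `t` already force `|r| + |s| ≤ k - 2`.
lemma mem_pentagramQ_iff :
    (r, s, t) ∈ pentagramQ k ↔ (2 : ℤ) ∣ r + s - k ∧ (4 : ℤ) ∣ t - 2 * s + k - 2 ∧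
      -(t + k - 2) ≤ 2 * s ∧ 2 * s ≤ t + k - 2 ∧ -(k - 2 - t) ≤ 2 * r ∧ 2 * r ≤ k - 2 - t := by
  simp only [pentagramQ, Set.mem_ofPred_eq]
  rcases abs_cases r with hr | hr <;> rcases abs_cases s with hs | hs <;> omega

lemma pentagramCovers_iff :
    pentagramCovers (r, s, t) (r', s', t') ↔
      t' = t + 1 ∧ (r' = r ∧ (s' = s + 1 ∨ s' = s - 1) ∨ s' = s ∧ (r' = r + 1 ∨ r' = r - 1)) := by
  simp only [pentagramCovers]
  rcases abs_cases (r' - r) with hr | hr <;> rcases abs_cases (s' - s) with hs | hs <;> omega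

lemma coe_pentagramPFinset (k : ℤ) : (pentagramPFinset k : Set (ℤ × ℤ × ℤ)) = pentagramP k := by
  ext ⟨r, s, t⟩
  simp only [pentagramPFinset, Finset.coe_filter, Finset.mem_product, Finset.mem_Icc,
    Set.mem_ofPred_eq, and_iff_right_iff_imp]
  rintro (h | h) <;> rw [mem_pentagramQ_iff] at h <;> omega

/-- The covering relation of the poset `P_k`, whose reflexive-transitive closure is
`pentagramLe k`. -/
def pentagramStep (k : ℤ) (x y : ℤ × ℤ × ℤ) : Prop :=
  x ∈ pentagramP k ∧ y ∈ pentagramP k ∧ pentagramCovers x y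

lemma isPentagramOrderIdeal_iff :
    IsPentagramOrderIdeal k I ↔ I ⊆ pentagramP k ∧ IsDownClosed (pentagramStep k) I := by
  rw [← isDownClosed_reflTransGen_iff]
  exact and_congr_right fun _ =>
    ⟨fun h x y hxy hy => h x y hy hxy, fun h x y hy hxy => h hxy hy⟩

/-- The elements of `Q_{k+1}` on the line `r + s = l`. -/
def pentagramLine (k l : ℤ) : Set (ℤ × ℤ × ℤ) :=
  {p | p ∈ pentagramQ (k + 1) ∧ p.1 + p.2.1 = l}

lemma not_pentagramStep_of_mem_pentagramLine {l : ℤ} {p q : ℤ × ℤ × ℤ}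
    (hp : p ∈ pentagramLine k l) (hq : q ∈ pentagramLine k l) : ¬ pentagramStep k p q := by
  obtain ⟨r, s, t⟩ := p
  obtain ⟨r', s', t'⟩ := q
  rintro ⟨-, -, hpq⟩
  have hp' : r + s = l := hp.2
  have hq' : r' + s' = l := hq.2
  rw [pentagramCovers_iff] at hpq
  omega

lemma eq_of_pentagramStep_left (hp : (r, s, t) ∈ pentagramQ (k + 1)) {x : ℤ × ℤ × ℤ}
    (hx : pentagramStep k x (r, s, t)) :
    x ∈ pentagramQ k ∧ (x = (r, s + 1, t - 1) ∨ x = (r, s - 1, t - 1)) := by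
  obtain ⟨r', s', t'⟩ := x
  obtain ⟨hxP, -, hx⟩ := hx
  simp only [pentagramP, Set.mem_union, mem_pentagramQ_iff, Prod.mk.injEq, pentagramCovers_iff]
    at hxP hp hx ⊢
  omega

lemma eq_of_pentagramStep_right (hp : (r, s, t) ∈ pentagramQ (k + 1)) {y : ℤ × ℤ × ℤ}
    (hy : pentagramStep k (r, s, t) y) : y = (r + 1, s, t + 1) ∨ y = (r - 1, s, t + 1) := by
  obtain ⟨r', s', t'⟩ := y
  obtain ⟨-, hyP, hy⟩ := hy
  simp only [pentagramP, Set.mem_union, mem_pentagramQ_iff, Prod.mk.injEq, pentagramCovers_iff]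
    at hyP hp hy ⊢
  omega

/-- The ideal `I` together with all points lying below the bottom of the column of `Q_k` over
`(r, s)`. With this convention every column of `Q_k`, even an empty one, has a height. -/
def lowerExtension (k : ℤ) (I : Set (ℤ × ℤ × ℤ)) : Set (ℤ × ℤ × ℤ) :=
  {p | p.2.2 + k - 2 < 2 * |p.2.1|} ∪ I

lemma mem_lowerExtension_iff :
    (r, s, t) ∈ lowerExtension k I ↔
      t + k - 2 < 2 * s ∨ t + k - 2 < -(2 * s) ∨ (r, s, t) ∈ I := by
  simp only [lowerExtension, Set.mem_union, Set.mem_ofPred_eq, ← or_assoc]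
  refine or_congr_left ?_
  rcases abs_cases s with hs | hs <;> omega

lemma mem_of_mem_lowerExtension {p : ℤ × ℤ × ℤ} (hp : p ∈ pentagramQ k)
    (h : p ∈ lowerExtension k I) : p ∈ I := by
  obtain ⟨r, s, t⟩ := p
  rw [mem_pentagramQ_iff] at hp
  rw [mem_lowerExtension_iff] at h
  rcases h with h | h | h
  · omega
  · omega
  · exact h

lemma mem_pentagramQ_of_mem (hI : I ⊆ pentagramP k) (hpar : (2 : ℤ) ∣ r + s - k)
    (h : (r, s, t) ∈ I) : (r, s, t) ∈ pentagramQ k := by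
  refine (hI h).resolve_right fun h' => ?_
  rw [mem_pentagramQ_iff] at h'
  omega

lemma mem_lowerExtension_diagonal (hIP : I ⊆ pentagramP k) (hI : IsDownClosed (pentagramStep k) I)
    (hpar : (2 : ℤ) ∣ r + s - k) (hr : r' = r + 1 ∨ r' = r - 1) (hs : s' = s + 1 ∨ s' = s - 1)
    (h : (r, s, t) ∈ lowerExtension k I) : (r', s', t - 2) ∈ lowerExtension k I := by
  rw [mem_lowerExtension_iff] at h ⊢
  by_cases hlow : t - 2 + k - 2 < 2 * s' ∨ t - 2 + k - 2 < -(2 * s')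
  · exact or_assoc.1 (.inl hlow)
  have hmem : (r, s, t) ∈ I := by
    rcases h with h | h | h
    · omega
    · omega
    · exact h
  have hQ := mem_pentagramQ_iff.1 (mem_pentagramQ_of_mem hIP hpar hmem)
  have hmid : (r', s, t - 1) ∈ pentagramP k := .inr (mem_pentagramQ_iff.2 (by omega))
  have hend : (r', s', t - 2) ∈ pentagramP k := .inl (mem_pentagramQ_iff.2 (by omega))
  have hmid_mem : (r', s, t - 1) ∈ I :=
    hI ⟨hmid, hIP hmem, pentagramCovers_iff.2 (by omega)⟩ hmem
  exact .inr (.inr (hI ⟨hend, hmid, pentagramCovers_iff.2 (by omega)⟩ hmid_mem))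

lemma mem_pentagramQ_of_lowerExtension (hIP : I ⊆ pentagramP k) (hpar : (2 : ℤ) ∣ r + s - (k + 1))
    (hrs : |r + s| ≤ k - 1) (ht : (4 : ℤ) ∣ t - 2 * s + k - 1)
    (hnorth : (r, s + 1, t - 1) ∈ lowerExtension k I)
    (hsouth : (r, s - 1, t - 1) ∈ lowerExtension k I)
    (heast : (r + 1, s, t + 1) ∉ lowerExtension k I) : (r, s, t) ∈ pentagramQ (k + 1) := by
  obtain ⟨hrs₁, hrs₂⟩ := abs_le.1 hrs
  rw [mem_lowerExtension_iff] at hnorth hsouth heast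
  have hQ {s'} (hs' : (2 : ℤ) ∣ r + s' - k) (h : (r, s', t - 1) ∈ I) :=
    mem_pentagramQ_iff.1 (mem_pentagramQ_of_mem hIP hs' h)
  rw [mem_pentagramQ_iff]
  by_cases hN : (r, s + 1, t - 1) ∈ I
  · have := hQ (by omega) hN
    omega
  by_cases hS : (r, s - 1, t - 1) ∈ I
  · have := hQ (by omega) hS
    omega
  -- Now `t - 1` lies below both columns, so that `s = 0` and `t = 1 - k`, and `hrs` bounds `r`.
  simp only [hN, hS, or_false] at hnorth hsouth
  omega

lemma isToggleable_of_lowerExtension (hp : (r, s, t) ∈ pentagramQ (k + 1))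
    (hnorth : (r, s + 1, t - 1) ∈ lowerExtension k I)
    (hsouth : (r, s - 1, t - 1) ∈ lowerExtension k I)
    (heast : (r + 1, s, t + 1) ∉ lowerExtension k I)
    (hwest : (r - 1, s, t + 1) ∉ lowerExtension k I) :
    IsToggleable (pentagramStep k) I (r, s, t) := by
  refine ⟨fun x hx => ?_, fun y hy hyI => ?_⟩
  · obtain ⟨hxQ, rfl | rfl⟩ := eq_of_pentagramStep_left hp hx
    · exact mem_of_mem_lowerExtension hxQ hnorth
    · exact mem_of_mem_lowerExtension hxQ hsouth
  · obtain rfl | rfl := eq_of_pentagramStep_right hp hy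
    · exact heast (.inr hyI)
    · exact hwest (.inr hyI)

/-- The column over `(r, s + 1)` is higher than the column over `(r - 1, s)` in the lower extension
of `I`. Here `t` is a height admissible for the former column, and `t + 2` is the next admissible
one for the latter. -/
def RisesAt (k : ℤ) (I : Set (ℤ × ℤ × ℤ)) (r s : ℤ) : Prop :=
  ∃ t, (4 : ℤ) ∣ t - 2 * s + k ∧ (r, s + 1, t) ∈ lowerExtension k I ∧
    (r - 1, s, t + 2) ∉ lowerExtension k I

lemma risesAt_of_sub_eq (hIP : I ⊆ pentagramP k) (hs : 0 ≤ s) (h : s - r = k - 1) :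
    RisesAt k I r s := by
  refine ⟨2 * s - k, by omega, mem_lowerExtension_iff.2 (by omega), fun hmem => ?_⟩
  have hmem' : (r - 1, s, 2 * s - k + 2) ∈ I := by
    rcases mem_lowerExtension_iff.1 hmem with h' | h' | h'
    · omega
    · omega
    · exact h'
  have := mem_pentagramQ_iff.1 (mem_pentagramQ_of_mem hIP (by omega) hmem')
  omega

lemma not_risesAt_of_sub_eq (hIP : I ⊆ pentagramP k) (hs : s ≤ -1)
    (h : r - s = k + 1) : ¬ RisesAt k I r s := by
  rintro ⟨t, -, hmem, hnot⟩
  rw [mem_lowerExtension_iff] at hmem hnot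
  have hnotI : (r, s + 1, t) ∉ I := fun h' => by
    have := mem_pentagramQ_iff.1 (mem_pentagramQ_of_mem hIP (by omega) h')
    omega
  simp only [hnotI, or_false] at hmem
  omega

lemma RisesAt.next_or_exists_isToggleable (h : RisesAt k I r s) (hIP : I ⊆ pentagramP k)
    (hI : IsDownClosed (pentagramStep k) I) (hpar : (2 : ℤ) ∣ r + s - (k + 1))
    (hrs : |r + s| ≤ k - 1) :
    RisesAt k I (r + 1) (s - 1) ∨
      ∃ t, (r, s, t) ∈ pentagramQ (k + 1) ∧ IsToggleable (pentagramStep k) I (r, s, t) := by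
  obtain ⟨t, ht, hnorth, hwest⟩ := h
  simp only [RisesAt, sub_add_cancel, add_sub_cancel_right]
  by_cases heast : (r + 1, s, t + 2) ∈ lowerExtension k I
  · refine .inl ⟨t + 2, by omega, heast, fun hsouth => hwest ?_⟩
    have := mem_lowerExtension_diagonal hIP hI (r' := r - 1) (s' := s) (by omega) (by omega)
      (by omega) hsouth
    rwa [add_sub_cancel_right] at this
  by_cases hsouth : (r, s - 1, t) ∈ lowerExtension k I
  · have ht₁ : t + 1 - 1 = t := by ring
    have ht₂ : t + 1 + 1 = t + 2 := by ring
    have hQ : (r, s, t + 1) ∈ pentagramQ (k + 1) :=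
      mem_pentagramQ_of_lowerExtension hIP hpar hrs (by omega) (by rwa [ht₁]) (by rwa [ht₁])
        (by rwa [ht₂])
    exact .inr ⟨t + 1, hQ, isToggleable_of_lowerExtension hQ (by rwa [ht₁]) (by rwa [ht₁])
      (by rwa [ht₂]) (by rwa [ht₂])⟩
  · refine .inl ⟨t - 2, by omega, ?_, by rwa [sub_add_cancel]⟩
    exact mem_lowerExtension_diagonal hIP hI (by omega) (by omega) (by omega) hnorth

lemma exists_mem_pentagramLine_isToggleable {l : ℤ} (hl : |l| ≤ k - 1)
    (hpar : (2 : ℤ) ∣ l - (k - 1)) (hIP : I ⊆ pentagramP k)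
    (hI : IsDownClosed (pentagramStep k) I) :
    ∃ p ∈ pentagramLine k l, IsToggleable (pentagramStep k) I p := by
  by_contra! hnone
  obtain ⟨m, hm⟩ := hpar
  obtain ⟨hl₁, hl₂⟩ := abs_le.1 hl
  have hrises (n : ℕ) : RisesAt k I (m + n) (l - m - n) := by
    induction n with
    | zero => exact risesAt_of_sub_eq hIP (by omega) (by omega)
    | succ n ih =>
      have hsum : m + n + (l - m - n) = l := by ring
      rcases ih.next_or_exists_isToggleable hIP hI (by omega) (by rwa [hsum]) with h | ⟨t, hQ, ht⟩
      · rwa [Nat.cast_succ, ← add_assoc, ← sub_sub]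
      · exact absurd ht (hnone _ ⟨hQ, hsum⟩)
  exact not_risesAt_of_sub_eq hIP (by omega) (by omega) (hrises k.toNat)

theorem sum_pentagramOrderIdeal_prod_eq_zero {l : ℤ} (hl : |l| ≤ k - 1)
    (hpar : (2 : ℤ) ∣ l - (k - 1)) {R : Type*} [CommRing R] {w : ℤ × ℤ × ℤ → R}
    (hw : ∀ p ∈ pentagramLine k l, w p = -1) :
    ∑ I ∈ (pentagramPFinset k).powerset.filter
        (fun I : Finset (ℤ × ℤ × ℤ) => IsPentagramOrderIdeal k (I : Set (ℤ × ℤ × ℤ))),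
      ∏ p ∈ I, w p = 0 := by
  have hideal : ∀ I ∈ (pentagramPFinset k).powerset,
      IsPentagramOrderIdeal k (I : Set (ℤ × ℤ × ℤ)) ↔
        IsDownClosed (pentagramStep k) (I : Set (ℤ × ℤ × ℤ)) := fun I hI => by
    rw [isPentagramOrderIdeal_iff, ← coe_pentagramPFinset, Finset.coe_subset]
    exact and_iff_right (Finset.mem_powerset.1 hI)
  rw [Finset.filter_congr hideal]
  refine sum_isDownClosed_prod_eq_zero (A := pentagramLine k l) ?_
    (fun _ hp _ hq => not_pentagramStep_of_mem_pentagramLine hp hq) hw ?_ <;>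
    rw [coe_pentagramPFinset]
  · exact fun p hp => .inr hp.1
  · exact fun I hIP hI => exists_mem_pentagramLine_isToggleable hl hpar hIP hI

lemma mem_AP_of_mem_pentagramLine {l : ℤ} (j : ℤ) {p : ℤ × ℤ × ℤ} (hp : p ∈ pentagramLine k l) :
    3 * p.1 + p.2.1 + j ∈ AP (j + 2 * l - (k - 1)) (j + 2 * l + (k - 1)) 2 := by
  obtain ⟨r, s, t⟩ := p
  obtain ⟨hQ, rfl⟩ := hp
  rw [mem_pentagramQ_iff] at hQ
  simp only [AP, Set.mem_ofPred_eq]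
  omega

lemma substNeg_X_of_mem {S : Set ℤ} {i : ℤ} (hi : i ∈ S) : substNeg S (X i) = -1 := by
  simp [substNeg, hi]

end PentagramPoset

theorem stmt1 (j k l : ℤ) (hk : 1 ≤ k) (hl : |l| ≤ k - 1) (hpar : (2 : ℤ) ∣ (l - (k - 1))) :
    substNeg (AP (j + 2 * l - (k - 1)) (j + 2 * l + (k - 1)) 2) (pentagramF j k) = 0 := by
  rw [pentagramF, map_sum]
  simp only [map_prod]
  exact sum_pentagramOrderIdeal_prod_eq_zero hl hpar fun p hp =>
    substNeg_X_of_mem (mem_AP_of_mem_pentagramLine j hp)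

end
end

section
/- Fix integers j and k with k ≥ 1. Let S ⊆ ℤ be a finite arithmetic progression whose consecutive terms differ by 2 or by 4, with |S| < k, and all of whose elements are congruent to j+k+1 modulo 2. Then F_{j,k}|_S ≠ 0. -/
/-!
An order ideal of `P_k` consists of its trace on `Q_k` and an arbitrary set of elements of `Q_{k+1}`
between those the trace forces and those it allows. Hence `F_{j,k}` is a sum over traces of a
monomial times the factors `1 + y` of the elements that are allowed but not forced.

Put `r = p + q - k`, `s = p - q`, `t = 2 p + 2 q - k + 2 - 4 c`. The traces are then the sets
`c > C p q`, where `C` is the corner-sum matrix of a `k × k` alternating sign matrix, and the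
allowed but not forced elements lie over the entries `1` of that matrix. The one over `(p, q)` has
label `4 p + 2 q - 3 k - 3 + j`, which depends only on the line `2 p + q = const`.

An arithmetic progression of fewer than `k` lines as in the theorem avoids some set of lines that
meets `[1, k]²` in a permutation matrix: a residue class modulo `k` if `k` is odd, and two residue
classes of opposite parity modulo `2 k` if `k` is even. Enlarge `S` by the labels of all other
lines, as may be done because the substitution at the larger set factors through the one at `S`. An
alternating sign matrix whose entries `1` all avoid the labels in the enlarged `S` is dominated
entrywise by the permutation matrix, hence equal to it. So every other term contains a factor
`1 + y` with `y = -1`, and the term of the permutation matrix, a product of nonzero factors, is all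
that survives.
-/

open MvPolynomial
open scoped Classical

noncomputable section

section LayeredPoset

variable {α R : Type*} {r : α → α → Prop} {A B : Finset α}

/-- A set `I` is downward closed in `P` for the relation `r` if it contains every element of `P`
that is `r`-below an element of `I`; for the covering relation of a poset these are the order
ideals. -/
def IsDownwardClosed (r : α → α → Prop) (P I : Finset α) : Prop :=
  ∀ x ∈ P, ∀ y ∈ I, r x y → x ∈ I

/-- The elements of the layer `B` below some element of `J`, which every order ideal containing `J`
has to contain. -/
def forcedSet (r : α → α → Prop) (B J : Finset α) : Finset α := {b ∈ B | ∃ a ∈ J, r b a}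

/-- The elements of the layer `B` all of whose lower neighbours in the layer `A` are in `J`: those
that an order ideal with trace `J` on `A` may contain. -/
def allowedSet (r : α → α → Prop) (A B J : Finset α) : Finset α := {b ∈ B | ∀ a ∈ A, r a b → a ∈ J}

lemma mem_forcedSet {J : Finset α} {b : α} : b ∈ forcedSet r B J ↔ b ∈ B ∧ ∃ a ∈ J, r b a := by
  rw [forcedSet, Finset.mem_filter]

lemma mem_allowedSet {J : Finset α} {b : α} :
    b ∈ allowedSet r A B J ↔ b ∈ B ∧ ∀ a ∈ A, r a b → a ∈ J := by
  rw [allowedSet, Finset.mem_filter]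

lemma allowedSet_subset {J : Finset α} : allowedSet r A B J ⊆ B := Finset.filter_subset _ _

variable [DecidableEq α] [CommSemiring R]

lemma isDownwardClosed_union_iff (hAB : Disjoint A B) (hA : ∀ x ∈ A, ∀ y ∈ A, ¬ r x y)
    (hB : ∀ x ∈ B, ∀ y ∈ B, ¬ r x y) {J K : Finset α} (hJ : J ⊆ A) (hK : K ⊆ B) :
    IsDownwardClosed r (A ∪ B) (J ∪ K) ↔ forcedSet r B J ⊆ K ∧ K ⊆ allowedSet r A B J := by
  have hdisj : ∀ x ∈ A, x ∉ B := fun _ hx => Finset.disjoint_left.1 hAB hx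
  simp only [IsDownwardClosed, Finset.subset_iff, mem_forcedSet, mem_allowedSet,
    Finset.mem_union] at *
  constructor
  · grind
  · rintro ⟨hforced, hallowed⟩ x (hx | hx) y (hy | hy) hxy
    · exact absurd hxy (hA x hx y (hJ hy))
    · exact Or.inl ((hallowed hy).2 x hx hxy)
    · exact Or.inr (hforced ⟨hx, y, hy, hxy⟩)
    · exact absurd hxy (hB x hx y (hK hy))

lemma sum_prod_Icc_finset {s t : Finset α} (hst : s ⊆ t) (w : α → R) :
    ∑ K ∈ Finset.Icc s t, ∏ x ∈ K, w x = (∏ x ∈ s, w x) * ∏ x ∈ t \ s, (1 + w x) := by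
  have hdisj : ∀ K ∈ (t \ s).powerset, Disjoint s K := fun K hK =>
    Finset.disjoint_sdiff.mono_right (Finset.mem_powerset.1 hK)
  rw [Finset.Icc_eq_image_powerset hst, Finset.sum_image, Finset.prod_one_add, Finset.mul_sum]
  · exact Finset.sum_congr rfl fun K hK => Finset.prod_union (hdisj K hK)
  · intro K hK L hL hKL
    rw [← Finset.union_sdiff_cancel_left (hdisj K hK),
      ← Finset.union_sdiff_cancel_left (hdisj L hL)]
    exact congrArg (· \ s) hKL

lemma sum_powerset_union {M : Type*} [AddCommMonoid M] (hAB : Disjoint A B) (f : Finset α → M) :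
    ∑ I ∈ (A ∪ B).powerset, f I = ∑ J ∈ A.powerset, ∑ K ∈ B.powerset, f (J ∪ K) := by
  rw [← Finset.sum_product']
  refine Finset.sum_nbij' (fun I => (I ∩ A, I ∩ B)) (fun P => P.1 ∪ P.2) ?_ ?_ ?_ ?_ ?_
  · simp
  · simp only [Finset.mem_product, Finset.mem_powerset]
    exact fun P hP => Finset.union_subset_union hP.1 hP.2
  · intro I hI
    rw [← Finset.inter_union_distrib_left, Finset.inter_eq_left.2 (Finset.mem_powerset.1 hI)]
  · simp only [Finset.mem_product, Finset.mem_powerset]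
    have := Finset.disjoint_left.1 hAB
    rintro ⟨J, K⟩ ⟨hJ, hK⟩
    ext x <;> grind
  · intro I hI
    rw [← Finset.inter_union_distrib_left, Finset.inter_eq_left.2 (Finset.mem_powerset.1 hI)]

/-- An order ideal is its trace `J` on `A` together with any set between the forced and the allowed
elements of `B`, so each allowed but not forced element `x` contributes a factor `1 + w x`. -/
theorem sum_prod_isDownwardClosed (hAB : Disjoint A B) (hA : ∀ x ∈ A, ∀ y ∈ A, ¬ r x y)
    (hB : ∀ x ∈ B, ∀ y ∈ B, ¬ r x y) (w : α → R) :
    ∑ I ∈ (A ∪ B).powerset with IsDownwardClosed r (A ∪ B) I, ∏ x ∈ I, w x =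
      ∑ J ∈ A.powerset with forcedSet r B J ⊆ allowedSet r A B J,
        (∏ x ∈ J, w x) * ((∏ x ∈ forcedSet r B J, w x) *
          ∏ x ∈ allowedSet r A B J \ forcedSet r B J, (1 + w x)) := by
  rw [Finset.sum_filter, sum_powerset_union hAB, Finset.sum_filter]
  refine Finset.sum_congr rfl fun J hJ => ?_
  rw [Finset.mem_powerset] at hJ
  have hideals : {K ∈ B.powerset | IsDownwardClosed r (A ∪ B) (J ∪ K)} =
      Finset.Icc (forcedSet r B J) (allowedSet r A B J) := by
    ext K
    rw [Finset.mem_filter, Finset.mem_powerset, Finset.mem_Icc]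
    constructor
    · exact fun ⟨hK, hclosed⟩ => (isDownwardClosed_union_iff hAB hA hB hJ hK).1 hclosed
    · intro hK
      have hKB : K ⊆ B := hK.2.trans allowedSet_subset
      exact ⟨hKB, (isDownwardClosed_union_iff hAB hA hB hJ hKB).2 hK⟩
  have hprod : ∀ K ∈ Finset.Icc (forcedSet r B J) (allowedSet r A B J),
      ∏ x ∈ J ∪ K, w x = (∏ x ∈ J, w x) * ∏ x ∈ K, w x := fun K hK =>
    Finset.prod_union (hAB.mono hJ ((Finset.mem_Icc.1 hK).2.trans allowedSet_subset))
  rw [← Finset.sum_filter, hideals, Finset.sum_congr rfl hprod, ← Finset.mul_sum]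
  split_ifs with hJ'
  · rw [sum_prod_Icc_finset hJ']
  · rw [Finset.Icc_eq_empty hJ', Finset.sum_empty, mul_zero]

end LayeredPoset

section Coordinates

variable {k : ℤ} {x y : ℤ × ℤ × ℤ}

/-- The lattice point of `Q_k` with coordinates `(p, q, c)`. In these coordinates `Q_k` is the set
`max 0 (p + q - k) < c ≤ min p q`, and the order ideals turn out to be given by corner-sum matrices
`C p q` of alternating sign matrices. -/
def coord (k p q c : ℤ) : ℤ × ℤ × ℤ := (p + q - k, p - q, 2 * p + 2 * q - k + 2 - 4 * c)

lemma coord_mem_pentagramQ {p q c : ℤ} :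
    coord k p q c ∈ pentagramQ k ↔ 0 < c ∧ p + q - k < c ∧ c ≤ p ∧ c ≤ q := by
  simp only [coord, pentagramQ, Set.mem_ofPred_eq]
  rcases abs_cases (p + q - k) with h | h <;> rcases abs_cases (p - q) with h' | h' <;> omega

lemma exists_eq_coord (hx : x ∈ pentagramQ k) : ∃ p q c, x = coord k p q c := by
  obtain ⟨r, s, t⟩ := x
  obtain ⟨-, ⟨e, he⟩, ⟨f, hf⟩, -⟩ := hx
  simp only [coord, Prod.mk.injEq]
  dsimp only at he hf
  rcases abs_cases s with h | h
  · exact ⟨e + k, e + k - s, e + k - s - f, by omega⟩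
  · exact ⟨e + k, e + k - s, e + k - f, by omega⟩

lemma coord_inj {p q c p' q' c' : ℤ} :
    coord k p q c = coord k p' q' c' ↔ p = p' ∧ q = q' ∧ c = c' := by
  simp only [coord, Prod.mk.injEq]
  omega

lemma pentagramCovers_coord_succ_coord {p q c p' q' c' : ℤ} :
    pentagramCovers (coord (k + 1) p q c) (coord k p' q' c') ↔
      (p' = p ∧ q' = q ∧ c' = c) ∨ (p' = p - 1 ∧ q' = q - 1 ∧ c' = c - 1) := by
  simp only [coord, pentagramCovers]
  rcases abs_cases (p' + q' - k - (p + q - (k + 1))) with h | h <;>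
    rcases abs_cases (p' - q' - (p - q)) with h' | h' <;> omega

lemma pentagramCovers_coord_coord_succ {p q c p' q' c' : ℤ} :
    pentagramCovers (coord k p' q' c') (coord (k + 1) p q c) ↔
      (p' = p - 1 ∧ q' = q ∧ c' = c) ∨ (p' = p ∧ q' = q - 1 ∧ c' = c) := by
  simp only [coord, pentagramCovers]
  rcases abs_cases (p + q - (k + 1) - (p' + q' - k)) with h | h <;>
    rcases abs_cases (p - q - (p' - q')) with h' | h' <;> omega

lemma not_pentagramCovers_of_mem_pentagramQ (hx : x ∈ pentagramQ k) (hy : y ∈ pentagramQ k) :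
    ¬ pentagramCovers x y := by
  rintro ⟨-, hxy⟩
  have hxk : 2 ∣ x.1 + x.2.1 - k := hx.2.1
  have hyk : 2 ∣ y.1 + y.2.1 - k := hy.2.1
  rcases abs_cases (y.1 - x.1) with h | h <;> rcases abs_cases (y.2.1 - x.2.1) with h' | h' <;>
    omega

lemma mem_pentagramPFinset : x ∈ pentagramPFinset k ↔ x ∈ pentagramP k := by
  simp only [pentagramPFinset, Finset.mem_filter, Finset.mem_product, Finset.mem_Icc,
    and_iff_right_iff_imp]
  obtain ⟨r, s, t⟩ := x
  simp only [pentagramP, pentagramQ, Set.mem_union, Set.mem_ofPred_eq]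
  rcases abs_cases r with hr | hr <;> rcases abs_cases s with hs | hs <;> omega

/-- `Q_k` as a `Finset`. -/
def pentagramQFinset (k : ℤ) : Finset (ℤ × ℤ × ℤ) :=
  (pentagramPFinset k).filter (· ∈ pentagramQ k)

lemma mem_pentagramQFinset : x ∈ pentagramQFinset k ↔ x ∈ pentagramQ k := by
  rw [pentagramQFinset, Finset.mem_filter, mem_pentagramPFinset, and_iff_right_iff_imp]
  exact Or.inl

lemma pentagramPFinset_eq_union :
    pentagramPFinset k = pentagramQFinset k ∪ pentagramQFinset (k + 1) := by
  ext x
  simp only [mem_pentagramPFinset, Finset.mem_union, mem_pentagramQFinset, pentagramP,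
    Set.mem_union]

lemma disjoint_pentagramQFinset_succ :
    Disjoint (pentagramQFinset k) (pentagramQFinset (k + 1)) := by
  refine Finset.disjoint_left.2 fun x hx hx' => ?_
  have hxk : 2 ∣ x.1 + x.2.1 - k := (mem_pentagramQFinset.1 hx).2.1
  have hxk' : 2 ∣ x.1 + x.2.1 - (k + 1) := (mem_pentagramQFinset.1 hx').2.1
  omega

lemma isPentagramOrderIdeal_iff_s2 {I : Finset (ℤ × ℤ × ℤ)} (hI : I ⊆ pentagramPFinset k) :
    IsPentagramOrderIdeal k I ↔ IsDownwardClosed pentagramCovers (pentagramPFinset k) I := by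
  have hIP : ∀ x ∈ I, x ∈ pentagramP k := fun x hx => mem_pentagramPFinset.1 (hI hx)
  constructor
  · rintro ⟨-, hle⟩ x hx y hy hxy
    exact hle x y hy (.single ⟨mem_pentagramPFinset.1 hx, hIP y hy, hxy⟩)
  · refine fun hclosed => ⟨hIP, fun x y hy hxy => ?_⟩
    induction hxy with
    | refl => exact hy
    | tail _ hbc ih => exact ih (hclosed _ (mem_pentagramPFinset.2 hbc.1) _ hy hbc.2.2)

/-- The elements of `Q_{k+1}` contained in every order ideal of `P_k` with trace `J` on `Q_k`. -/
def pentagramForced (k : ℤ) (J : Finset (ℤ × ℤ × ℤ)) : Finset (ℤ × ℤ × ℤ) :=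
  forcedSet pentagramCovers (pentagramQFinset (k + 1)) J

/-- The elements of `Q_{k+1}` contained in some order ideal of `P_k` with trace `J` on `Q_k`. -/
def pentagramAllowed (k : ℤ) (J : Finset (ℤ × ℤ × ℤ)) : Finset (ℤ × ℤ × ℤ) :=
  allowedSet pentagramCovers (pentagramQFinset k) (pentagramQFinset (k + 1)) J

/-- `J` is the trace `I ∩ Q_k` of some order ideal `I` of `P_k`. -/
structure IsPentagramTrace (k : ℤ) (J : Finset (ℤ × ℤ × ℤ)) : Prop where
  subset : J ⊆ pentagramQFinset k
  forced_subset_allowed : pentagramForced k J ⊆ pentagramAllowed k J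

lemma pentagramF_eq_sum (j k : ℤ) :
    pentagramF j k = ∑ J ∈ (pentagramQFinset k).powerset with IsPentagramTrace k J,
      (∏ x ∈ J, X (3 * x.1 + x.2.1 + j)) * ((∏ x ∈ pentagramForced k J, X (3 * x.1 + x.2.1 + j)) *
        ∏ x ∈ pentagramAllowed k J \ pentagramForced k J, (1 + X (3 * x.1 + x.2.1 + j))) := by
  have hlayer (n : ℤ) : ∀ x ∈ pentagramQFinset n, ∀ y ∈ pentagramQFinset n,
      ¬ pentagramCovers x y := fun x hx y hy =>
    not_pentagramCovers_of_mem_pentagramQ (mem_pentagramQFinset.1 hx) (mem_pentagramQFinset.1 hy)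
  have htrace : ∀ J ∈ (pentagramQFinset k).powerset,
      IsPentagramTrace k J ↔ pentagramForced k J ⊆ pentagramAllowed k J := fun J hJ =>
    ⟨fun h => h.forced_subset_allowed, fun h => ⟨Finset.mem_powerset.1 hJ, h⟩⟩
  rw [pentagramF, Finset.filter_congr fun I hI =>
    isPentagramOrderIdeal_iff_s2 (Finset.mem_powerset.1 hI), pentagramPFinset_eq_union,
    Finset.filter_congr htrace]
  exact sum_prod_isDownwardClosed disjoint_pentagramQFinset_succ (hlayer k) (hlayer (k + 1)) _

lemma coord_mem_pentagramForced {J : Finset (ℤ × ℤ × ℤ)} (hJ : J ⊆ pentagramQFinset k)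
    {p q c : ℤ} :
    coord (k + 1) p q c ∈ pentagramForced k J ↔ coord (k + 1) p q c ∈ pentagramQ (k + 1) ∧
      (coord k p q c ∈ J ∨ coord k (p - 1) (q - 1) (c - 1) ∈ J) := by
  rw [pentagramForced, mem_forcedSet, mem_pentagramQFinset]
  refine and_congr_right fun _ => ⟨?_, ?_⟩
  · rintro ⟨y, hy, hcov⟩
    obtain ⟨p', q', c', rfl⟩ := exists_eq_coord (mem_pentagramQFinset.1 (hJ hy))
    obtain ⟨rfl, rfl, rfl⟩ | ⟨rfl, rfl, rfl⟩ := pentagramCovers_coord_succ_coord.1 hcov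
    exacts [Or.inl hy, Or.inr hy]
  · rintro (hy | hy)
    · exact ⟨_, hy, pentagramCovers_coord_succ_coord.2 (Or.inl ⟨rfl, rfl, rfl⟩)⟩
    · exact ⟨_, hy, pentagramCovers_coord_succ_coord.2 (Or.inr ⟨rfl, rfl, rfl⟩)⟩

lemma coord_mem_pentagramAllowed {J : Finset (ℤ × ℤ × ℤ)} {p q c : ℤ} :
    coord (k + 1) p q c ∈ pentagramAllowed k J ↔ coord (k + 1) p q c ∈ pentagramQ (k + 1) ∧
      (coord k (p - 1) q c ∈ pentagramQ k → coord k (p - 1) q c ∈ J) ∧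
      (coord k p (q - 1) c ∈ pentagramQ k → coord k p (q - 1) c ∈ J) := by
  rw [pentagramAllowed, mem_allowedSet, mem_pentagramQFinset]
  refine and_congr_right fun _ => ⟨fun h => ⟨fun hmem => ?_, fun hmem => ?_⟩, ?_⟩
  · exact h _ (mem_pentagramQFinset.2 hmem)
      (pentagramCovers_coord_coord_succ.2 (Or.inl ⟨rfl, rfl, rfl⟩))
  · exact h _ (mem_pentagramQFinset.2 hmem)
      (pentagramCovers_coord_coord_succ.2 (Or.inr ⟨rfl, rfl, rfl⟩))
  · rintro ⟨hleft, hright⟩ y hy hcov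
    obtain ⟨p', q', c', rfl⟩ := exists_eq_coord (mem_pentagramQFinset.1 hy)
    obtain ⟨rfl, rfl, rfl⟩ | ⟨rfl, rfl, rfl⟩ := pentagramCovers_coord_coord_succ.1 hcov
    exacts [hleft (mem_pentagramQFinset.1 hy), hright (mem_pentagramQFinset.1 hy)]

end Coordinates

section CornerSum

variable {k n : ℤ} {f : ℤ → ℤ} {C C' : ℤ → ℤ → ℤ}

/-- `f` restricted to `[0, k]` is a lattice path from `0` to `n` with steps `0` and `1`. -/
structure IsUnitPath (k n : ℤ) (f : ℤ → ℤ) : Prop where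
  zero : f 0 = 0
  top : f k = n
  le_step : ∀ i, 1 ≤ i → i ≤ k → f (i - 1) ≤ f i
  step_le : ∀ i, 1 ≤ i → i ≤ k → f i ≤ f (i - 1) + 1

lemma monotoneOn_Icc_zero_of_pred_le (hf : ∀ i, 1 ≤ i → i ≤ k → f (i - 1) ≤ f i) :
    MonotoneOn f (Set.Icc 0 k) :=
  monotoneOn_of_sub_one_le Set.ordConnected_Icc fun i _ hi hi' =>
    hf i (by have := hi'.1; omega) hi.2

lemma IsUnitPath.monotoneOn (hf : IsUnitPath k n f) : MonotoneOn f (Set.Icc 0 k) :=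
  monotoneOn_Icc_zero_of_pred_le hf.le_step

lemma IsUnitPath.monotoneOn_sub (hf : IsUnitPath k n f) :
    MonotoneOn (fun i => i - f i) (Set.Icc 0 k) :=
  monotoneOn_Icc_zero_of_pred_le fun i hi hi' => by have := hf.step_le i hi hi'; omega

lemma IsUnitPath.bounds (hf : IsUnitPath k n f) {i : ℤ} (hi : 0 ≤ i) (hi' : i ≤ k) :
    0 ≤ f i ∧ f i ≤ n ∧ f i ≤ i ∧ i + n - k ≤ f i := by
  have hmem : i ∈ Set.Icc 0 k := ⟨hi, hi'⟩
  have h0 : (0 : ℤ) ∈ Set.Icc 0 k := ⟨le_rfl, hi.trans hi'⟩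
  have hk : k ∈ Set.Icc 0 k := ⟨hi.trans hi', le_rfl⟩
  have := hf.monotoneOn h0 hmem hi
  have := hf.monotoneOn hmem hk hi'
  have := hf.monotoneOn_sub h0 hmem hi
  have := hf.monotoneOn_sub hmem hk hi'
  have := hf.zero
  have := hf.top
  dsimp only at *
  omega

/-- `C p q`, for `0 ≤ p, q ≤ k`, is the corner-sum matrix of a `k × k` alternating sign matrix: the
sum of the entries in the first `p` rows and `q` columns. -/
structure IsCornerSum (k : ℤ) (C : ℤ → ℤ → ℤ) : Prop where
  row : ∀ p, 0 ≤ p → p ≤ k → IsUnitPath k p (C p)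
  col : ∀ q, 0 ≤ q → q ≤ k → IsUnitPath k q fun p => C p q

/-- The `(p, q)` entry of the matrix with corner sums `C`. -/
def cornerEntry (C : ℤ → ℤ → ℤ) (p q : ℤ) : ℤ :=
  C p q - C (p - 1) q - C p (q - 1) + C (p - 1) (q - 1)

lemma IsCornerSum.cornerEntry_le_one (hC : IsCornerSum k C) {p q : ℤ} (hp : 1 ≤ p) (hpk : p ≤ k)
    (hq : 1 ≤ q) (hqk : q ≤ k) : cornerEntry C p q ≤ 1 := by
  have := (hC.row p (by omega) hpk).step_le q hq hqk
  have := (hC.row (p - 1) (by omega) (by omega)).le_step q hq hqk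
  rw [cornerEntry]
  omega

/-- The difference of the `p`-th rows of the two matrices has nondecreasing partial sums, which
vanish at both ends, so entrywise domination already forces equality. -/
lemma IsCornerSum.eq_of_cornerEntry_le (hC : IsCornerSum k C) (hC' : IsCornerSum k C')
    (hle : ∀ p q, 1 ≤ p → p ≤ k → 1 ≤ q → q ≤ k → cornerEntry C p q ≤ cornerEntry C' p q)
    {p q : ℤ} (hp : 0 ≤ p) (hpk : p ≤ k) (hq : 0 ≤ q) (hqk : q ≤ k) : C p q = C' p q := by
  induction p, hp using Int.leInduction with
  | base => rw [(hC.col q hq hqk).zero, (hC'.col q hq hqk).zero]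
  | succ p hp ih =>
    set D : ℤ → ℤ := fun i => (C' (p + 1) i - C' p i) - (C (p + 1) i - C p i) with hD
    have hmono : MonotoneOn D (Set.Icc 0 k) := monotoneOn_Icc_zero_of_pred_le fun i hi hik => by
      have := hle (p + 1) i (by omega) hpk hi hik
      simp only [cornerEntry, add_sub_cancel_right] at this
      simp only [hD]
      omega
    have hD0 : D 0 = 0 := by
      simp only [hD, (hC.row p hp (by omega)).zero, (hC.row (p + 1) (by omega) hpk).zero,
        (hC'.row p hp (by omega)).zero, (hC'.row (p + 1) (by omega) hpk).zero, sub_zero]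
    have hDk : D k = 0 := by
      simp only [hD, (hC.row p hp (by omega)).top, (hC.row (p + 1) (by omega) hpk).top,
        (hC'.row p hp (by omega)).top, (hC'.row (p + 1) (by omega) hpk).top, sub_self]
    have hk : 0 ≤ k := hq.trans hqk
    have h0 := hmono ⟨le_rfl, hk⟩ ⟨hq, hqk⟩ hq
    have h1 := hmono ⟨hq, hqk⟩ ⟨hk, le_rfl⟩ hqk
    have := ih (by omega)
    simp only [hD] at *
    omega

/-- The matrix of corner sums of `A`, the rows and columns of `A` being numbered from `1`. -/
def cornerSum (A : ℤ → ℤ → ℤ) (p q : ℤ) : ℤ := ∑ i ∈ Finset.Icc 1 p, ∑ j ∈ Finset.Icc 1 q, A i j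

lemma sum_Icc_one_eq_add (g : ℤ → ℤ) {i : ℤ} (hi : 1 ≤ i) :
    ∑ l ∈ Finset.Icc 1 i, g l = ∑ l ∈ Finset.Icc 1 (i - 1), g l + g i := by
  rw [← Finset.insert_Icc_sub_one_right_eq_Icc hi, Finset.sum_insert (by simp), add_comm]

variable {A : ℤ → ℤ → ℤ}

lemma cornerSum_swap (A : ℤ → ℤ → ℤ) (p q : ℤ) :
    cornerSum (fun i j => A j i) q p = cornerSum A p q := Finset.sum_comm

lemma cornerEntry_cornerSum {p q : ℤ} (hp : 1 ≤ p) (hq : 1 ≤ q) :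
    cornerEntry (cornerSum A) p q = A p q := by
  have hrow : ∀ q, cornerSum A p q = cornerSum A (p - 1) q + ∑ j ∈ Finset.Icc 1 q, A p j :=
    fun q => sum_Icc_one_eq_add _ hp
  rw [cornerEntry, hrow, hrow, sum_Icc_one_eq_add _ hq]
  ring

lemma isUnitPath_cornerSum (hA : ∀ p q, 0 ≤ A p q)
    (hrow : ∀ p, 1 ≤ p → p ≤ k → ∑ q ∈ Finset.Icc 1 k, A p q = 1)
    (hcol : ∀ q, 1 ≤ q → q ≤ k → ∑ p ∈ Finset.Icc 1 k, A p q = 1) {p : ℤ} (hp : 0 ≤ p)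
    (hpk : p ≤ k) : IsUnitPath k p (cornerSum A p) := by
  have hstep : ∀ q, 1 ≤ q →
      cornerSum A p q = cornerSum A p (q - 1) + ∑ i ∈ Finset.Icc 1 p, A i q := fun q hq => by
    simp only [cornerSum, ← Finset.sum_add_distrib]
    exact Finset.sum_congr rfl fun i _ => sum_Icc_one_eq_add _ hq
  refine ⟨by simp [cornerSum], ?_, fun q hq _ => ?_, fun q hq hqk => ?_⟩
  · have hone : ∀ i ∈ Finset.Icc 1 p, ∑ j ∈ Finset.Icc 1 k, A i j = 1 := fun i hi => by
      rw [Finset.mem_Icc] at hi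
      exact hrow i hi.1 (hi.2.trans hpk)
    rw [cornerSum, Finset.sum_congr rfl hone]
    simp [hp]
  · rw [hstep q hq, le_add_iff_nonneg_right]
    exact Finset.sum_nonneg fun i _ => hA i q
  · rw [hstep q hq, add_le_add_iff_left]
    exact (Finset.sum_le_sum_of_subset_of_nonneg (Finset.Icc_subset_Icc_right hpk)
      fun i _ _ => hA i q).trans_eq (hcol q hq hqk)

lemma isCornerSum_cornerSum (hA : ∀ p q, 0 ≤ A p q)
    (hrow : ∀ p, 1 ≤ p → p ≤ k → ∑ q ∈ Finset.Icc 1 k, A p q = 1)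
    (hcol : ∀ q, 1 ≤ q → q ≤ k → ∑ p ∈ Finset.Icc 1 k, A p q = 1) :
    IsCornerSum k (cornerSum A) where
  row _ := isUnitPath_cornerSum hA hrow hcol
  col q hq hqk := by
    simp only [← cornerSum_swap A]
    exact isUnitPath_cornerSum (fun p q => hA q p) hcol hrow hq hqk

end CornerSum

section Trace

variable {k p q c : ℤ} {C C' : ℤ → ℤ → ℤ} {J : Finset (ℤ × ℤ × ℤ)}

/-- The trace on `Q_k` that contains exactly the levels `c > C p q` over `(p, q)`. -/
def cornerTrace (k : ℤ) (C : ℤ → ℤ → ℤ) : Finset (ℤ × ℤ × ℤ) :=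
  {x ∈ pentagramQFinset k | ∃ p q c, x = coord k p q c ∧ C p q < c}

lemma cornerTrace_subset : cornerTrace k C ⊆ pentagramQFinset k := Finset.filter_subset _ _

lemma coord_mem_cornerTrace :
    coord k p q c ∈ cornerTrace k C ↔ coord k p q c ∈ pentagramQ k ∧ C p q < c := by
  rw [cornerTrace, Finset.mem_filter, mem_pentagramQFinset]
  refine and_congr_right fun _ => ⟨?_, fun h => ⟨p, q, c, rfl, h⟩⟩
  rintro ⟨p', q', c', hcoord, h⟩
  obtain ⟨rfl, rfl, rfl⟩ := coord_inj.1 hcoord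
  exact h

lemma eq_cornerTrace_of_forall (hJ : J ⊆ pentagramQFinset k)
    (h : ∀ p q c, coord k p q c ∈ pentagramQ k → (coord k p q c ∈ J ↔ C p q < c)) :
    J = cornerTrace k C := by
  ext x
  constructor
  · intro hx
    have hxQ := mem_pentagramQFinset.1 (hJ hx)
    obtain ⟨p, q, c, rfl⟩ := exists_eq_coord hxQ
    exact coord_mem_cornerTrace.2 ⟨hxQ, (h p q c hxQ).1 hx⟩
  · intro hx
    obtain ⟨p, q, c, rfl⟩ := exists_eq_coord (mem_pentagramQFinset.1 (cornerTrace_subset hx))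
    obtain ⟨hxQ, hlt⟩ := coord_mem_cornerTrace.1 hx
    exact (h p q c hxQ).2 hlt

lemma IsCornerSum.exists_cornerEntry_lt (hC : IsCornerSum k C) (hC' : IsCornerSum k C')
    (hne : cornerTrace k C ≠ cornerTrace k C') :
    ∃ p q, (1 ≤ p ∧ p ≤ k) ∧ (1 ≤ q ∧ q ≤ k) ∧ cornerEntry C' p q < cornerEntry C p q := by
  by_contra! hle
  refine hne (eq_cornerTrace_of_forall cornerTrace_subset fun p q c hx => ?_)
  rw [coord_mem_cornerTrace, and_iff_right hx]
  rw [coord_mem_pentagramQ] at hx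
  rw [hC.eq_of_cornerEntry_le hC' (fun p q hp hpk hq hqk => hle p q ⟨hp, hpk⟩ ⟨hq, hqk⟩)
    (by omega) (by omega) (by omega) (by omega)]

lemma IsCornerSum.coord_mem_forced_cornerTrace (hC : IsCornerSum k C) :
    coord (k + 1) p q c ∈ pentagramForced k (cornerTrace k C) ↔
      coord (k + 1) p q c ∈ pentagramQ (k + 1) ∧ (C p q < c ∨ C (p - 1) (q - 1) + 1 < c) := by
  rw [coord_mem_pentagramForced cornerTrace_subset, coord_mem_cornerTrace,
    coord_mem_cornerTrace]
  refine and_congr_right fun hx => ?_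
  rw [coord_mem_pentagramQ] at hx
  have := (hC.row p (by omega) (by omega)).bounds (i := q) (by omega) (by omega)
  have := (hC.row (p - 1) (by omega) (by omega)).bounds (i := q - 1) (by omega) (by omega)
  simp only [coord_mem_pentagramQ]
  omega

lemma IsCornerSum.coord_mem_allowed_cornerTrace (hC : IsCornerSum k C) :
    coord (k + 1) p q c ∈ pentagramAllowed k (cornerTrace k C) ↔
      coord (k + 1) p q c ∈ pentagramQ (k + 1) ∧ C (p - 1) q < c ∧ C p (q - 1) < c := by
  rw [coord_mem_pentagramAllowed, coord_mem_cornerTrace, coord_mem_cornerTrace]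
  refine and_congr_right fun hx => ?_
  rw [coord_mem_pentagramQ] at hx
  have := (hC.row (p - 1) (by omega) (by omega)).bounds (i := q) (by omega) (by omega)
  have := (hC.row p (by omega) (by omega)).bounds (i := q - 1) (by omega) (by omega)
  simp only [coord_mem_pentagramQ]
  omega

lemma IsCornerSum.isPentagramTrace_cornerTrace (hC : IsCornerSum k C) :
    IsPentagramTrace k (cornerTrace k C) where
  subset := cornerTrace_subset
  forced_subset_allowed x hx := by
    obtain ⟨p, q, c, rfl⟩ :=
      exists_eq_coord (mem_pentagramQFinset.1 (mem_forcedSet.1 hx).1)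
    obtain ⟨hxQ, hforced⟩ := hC.coord_mem_forced_cornerTrace.1 hx
    refine hC.coord_mem_allowed_cornerTrace.2 ⟨hxQ, ?_⟩
    rw [coord_mem_pentagramQ] at hxQ
    have := (hC.row p (by omega) (by omega)).le_step q (by omega) (by omega)
    have := (hC.row (p - 1) (by omega) (by omega)).step_le q (by omega) (by omega)
    have := (hC.col q (by omega) (by omega)).le_step p (by omega) (by omega)
    have := (hC.col (q - 1) (by omega) (by omega)).step_le p (by omega) (by omega)
    omega

lemma IsCornerSum.coord_mem_allowed_sdiff_forced_cornerTrace (hC : IsCornerSum k C) :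
    coord (k + 1) p q c ∈
        pentagramAllowed k (cornerTrace k C) \ pentagramForced k (cornerTrace k C) ↔
      (1 ≤ p ∧ p ≤ k) ∧ (1 ≤ q ∧ q ≤ k) ∧ cornerEntry C p q = 1 ∧ c = C p q := by
  rw [Finset.mem_sdiff, hC.coord_mem_allowed_cornerTrace, hC.coord_mem_forced_cornerTrace,
    coord_mem_pentagramQ, cornerEntry]
  by_cases hpq : (1 ≤ p ∧ p ≤ k) ∧ (1 ≤ q ∧ q ≤ k)
  · obtain ⟨⟨hp, hpk⟩, hq, hqk⟩ := hpq
    have := (hC.row p (by omega) hpk).le_step q hq hqk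
    have := (hC.row p (by omega) hpk).step_le q hq hqk
    have := (hC.row (p - 1) (by omega) (by omega)).le_step q hq hqk
    have := (hC.col q (by omega) hqk).le_step p hp hpk
    have := (hC.col q (by omega) hqk).step_le p hp hpk
    have := (hC.col (q - 1) (by omega) (by omega)).le_step p hp hpk
    have := (hC.row p (by omega) hpk).bounds (i := q) (by omega) hqk
    have := (hC.row (p - 1) (by omega) (by omega)).bounds (i := q) (by omega) hqk
    omega
  · omega

/-- The levels over `(p, q)` in the trace `J`, together with all levels `c > min p q` beyond
`Q_k`. -/
def extendedColumn (k : ℤ) (J : Finset (ℤ × ℤ × ℤ)) (p q : ℤ) : Set ℤ :=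
  {c | min p q < c ∨ coord k p q c ∈ J}

lemma mem_extendedColumn :
    c ∈ extendedColumn k J p q ↔ min p q < c ∨ coord k p q c ∈ J := Iff.rfl

namespace IsPentagramTrace

lemma mem_pentagramQ (hJ : IsPentagramTrace k J) {x : ℤ × ℤ × ℤ} (h : x ∈ J) :
    x ∈ pentagramQ k :=
  mem_pentagramQFinset.1 (hJ.subset h)

/-- Two covering steps, from `Q_k` through `coord (k + 1) p q c ∈ Q_{k+1}` back to `Q_k`. -/
lemma coord_mem_of_forced (hJ : IsPentagramTrace k J)
    (hx : coord (k + 1) p q c ∈ pentagramQ (k + 1))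
    (h : coord k p q c ∈ J ∨ coord k (p - 1) (q - 1) (c - 1) ∈ J) :
    (coord k (p - 1) q c ∈ pentagramQ k → coord k (p - 1) q c ∈ J) ∧
      (coord k p (q - 1) c ∈ pentagramQ k → coord k p (q - 1) c ∈ J) :=
  (coord_mem_pentagramAllowed.1 (hJ.forced_subset_allowed
    ((coord_mem_pentagramForced hJ.subset).2 ⟨hx, h⟩))).2

lemma mem_extendedColumn_pred (hJ : IsPentagramTrace k J) (h : c ∈ extendedColumn k J p q) :
    c ∈ extendedColumn k J (p - 1) q ∧ c ∈ extendedColumn k J p (q - 1) := by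
  simp only [mem_extendedColumn] at h ⊢
  rcases h with h | h
  · omega
  have hb := coord_mem_pentagramQ.1 (hJ.mem_pentagramQ h)
  have := hJ.coord_mem_of_forced (p := p) (q := q) (c := c)
    (coord_mem_pentagramQ.2 (by omega)) (Or.inl h)
  simp only [coord_mem_pentagramQ] at this
  grind

lemma succ_mem_extendedColumn_succ (hJ : IsPentagramTrace k J) (h : c ∈ extendedColumn k J p q) :
    c + 1 ∈ extendedColumn k J (p + 1) q ∧ c + 1 ∈ extendedColumn k J p (q + 1) := by
  simp only [mem_extendedColumn] at h ⊢
  rcases h with h | h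
  · omega
  have hb := coord_mem_pentagramQ.1 (hJ.mem_pentagramQ h)
  have := hJ.coord_mem_of_forced (p := p + 1) (q := q + 1) (c := c + 1)
    (coord_mem_pentagramQ.2 (by omega)) (Or.inr (by simpa only [add_sub_cancel_right]))
  simp only [coord_mem_pentagramQ, add_sub_cancel_right] at this
  grind

lemma mem_extendedColumn_mono (hJ : IsPentagramTrace k J) {c' : ℤ}
    (h : c ∈ extendedColumn k J p q) (hc : c ≤ c') : c' ∈ extendedColumn k J p q := by
  induction c', hc using Int.leInduction with
  | base => exact h
  | succ n _ ih =>
    have := (hJ.mem_extendedColumn_pred (hJ.succ_mem_extendedColumn_succ ih).1).1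
    rwa [add_sub_cancel_right] at this

lemma min_lt_of_mem_extendedColumn (hJ : IsPentagramTrace k J)
    (h : c ∈ extendedColumn k J p q) : min p q < c ∨ 0 < c ∧ p + q - k < c :=
  h.imp_right fun h =>
    have hb := coord_mem_pentagramQ.1 (hJ.mem_pentagramQ h)
    ⟨hb.1, hb.2.1⟩

lemma exists_extendedColumn_eq_Ioi (hJ : IsPentagramTrace k J) (p q : ℤ) :
    ∃ b, extendedColumn k J p q = Set.Ioi b := by
  have hbdd : ∀ c, c ∈ extendedColumn k J p q → min 0 (min p q) ≤ c := fun c hc => by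
    have := hJ.min_lt_of_mem_extendedColumn hc
    omega
  obtain ⟨b, hb, hleast⟩ := Int.exists_least_of_bdd ⟨_, hbdd⟩ ⟨min p q + 1, Or.inl (by omega)⟩
  refine ⟨b - 1, Set.ext fun c => ?_⟩
  rw [Set.mem_Ioi, Int.sub_one_lt_iff]
  exact ⟨hleast c, hJ.mem_extendedColumn_mono hb⟩

lemma isCornerSum_of_extendedColumn_eq_Ioi (hJ : IsPentagramTrace k J)
    (hC : ∀ p q, extendedColumn k J p q = Set.Ioi (C p q)) : IsCornerSum k C := by
  have hself : ∀ p q, C p q + 1 ∈ extendedColumn k J p q := fun p q => by simp [hC]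
  have hmin : ∀ p q, C p q ≤ min p q := fun p q => by
    have : min p q + 1 ∈ extendedColumn k J p q := Or.inl (lt_add_one _)
    rwa [hC, Set.mem_Ioi, Int.lt_add_one_iff] at this
  have hmax : ∀ p q, min p q ≤ C p q ∨ 0 ≤ C p q ∧ p + q - k ≤ C p q := fun p q => by
    have := hJ.min_lt_of_mem_extendedColumn (hself p q)
    omega
  have hpred : ∀ p q, C (p - 1) q ≤ C p q ∧ C p (q - 1) ≤ C p q := fun p q => by
    simpa only [hC, Set.mem_Ioi, Int.lt_add_one_iff] using hJ.mem_extendedColumn_pred (hself p q)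
  have hsucc : ∀ p q, C (p + 1) q ≤ C p q + 1 ∧ C p (q + 1) ≤ C p q + 1 := fun p q => by
    simpa only [hC, Set.mem_Ioi, Int.lt_add_one_iff] using
      hJ.succ_mem_extendedColumn_succ (hself p q)
  refine ⟨fun p hp hpk => ⟨?_, ?_, fun q _ _ => (hpred p q).2, fun q _ _ => ?_⟩,
    fun q hq hqk => ⟨?_, ?_, fun p _ _ => (hpred p q).1, fun p _ _ => ?_⟩⟩
  · have := hmin p 0; have := hmax p 0; omega
  · have := hmin p k; have := hmax p k; omega
  · simpa only [sub_add_cancel] using (hsucc p (q - 1)).2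
  · have := hmin 0 q; have := hmax 0 q; omega
  · have := hmin k q; have := hmax k q; omega
  · simpa only [sub_add_cancel] using (hsucc (p - 1) q).1

lemma exists_eq_cornerTrace (hJ : IsPentagramTrace k J) :
    ∃ C, IsCornerSum k C ∧ J = cornerTrace k C := by
  choose C hC using hJ.exists_extendedColumn_eq_Ioi
  refine ⟨C, hJ.isCornerSum_of_extendedColumn_eq_Ioi hC,
    eq_cornerTrace_of_forall hJ.subset fun p q c hx => ?_⟩
  rw [coord_mem_pentagramQ] at hx
  rw [← Set.mem_Ioi, ← hC, mem_extendedColumn, or_iff_right (by omega)]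

end IsPentagramTrace

end Trace

section PermutationPattern

variable {k : ℤ} {M : ℤ → ℤ → Prop}

/-- The positions `(p, q) ∈ [1, k]²` with `M p q` are those of the ones in a `k × k` permutation
matrix. -/
structure IsPermutationPattern (k : ℤ) (M : ℤ → ℤ → Prop) : Prop where
  row : ∀ p, 1 ≤ p → p ≤ k → ∃! q, q ∈ Finset.Icc 1 k ∧ M p q
  col : ∀ q, 1 ≤ q → q ≤ k → ∃! p, p ∈ Finset.Icc 1 k ∧ M p q

lemma sum_ite_eq_one_of_existsUnique {s : Finset ℤ} {P : ℤ → Prop} (h : ∃! i, i ∈ s ∧ P i) :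
    ∑ i ∈ s, (if P i then 1 else 0 : ℤ) = 1 := by
  obtain ⟨i, ⟨his, hi⟩, huniq⟩ := h
  rw [Finset.sum_eq_single_of_mem i his fun l hls hli => if_neg fun hl => hli (huniq l ⟨hls, hl⟩),
    if_pos hi]

lemma IsPermutationPattern.exists_isCornerSum (hM : IsPermutationPattern k M) :
    ∃ C, IsCornerSum k C ∧
      ∀ p q, 1 ≤ p → 1 ≤ q → cornerEntry C p q = if M p q then 1 else 0 :=
  ⟨cornerSum fun p q => if M p q then 1 else 0,
    isCornerSum_cornerSum (fun p q => by split_ifs <;> norm_num)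
      (fun p hp hpk => sum_ite_eq_one_of_existsUnique (hM.row p hp hpk))
      (fun q hq hqk => sum_ite_eq_one_of_existsUnique (hM.col q hq hqk)),
    fun _ _ => cornerEntry_cornerSum⟩

lemma exists_forall_dvd_sub_iff_eq {n : ℤ} (hn : 0 < n) (y : ℤ) :
    ∃ z ∈ Finset.Icc 1 n, ∀ i ∈ Finset.Icc 1 n, n ∣ i - y ↔ i = z := by
  simp only [Finset.mem_Icc]
  have hdvd : n ∣ (y - 1) % n + 1 - y := by
    have := (Int.dvd_self_sub_emod (x := y - 1) (m := n)).neg_right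
    rwa [show -(y - 1 - (y - 1) % n) = (y - 1) % n + 1 - y by ring] at this
  have := Int.emod_nonneg (y - 1) hn.ne'
  have := Int.emod_lt_of_pos (y - 1) hn
  refine ⟨(y - 1) % n + 1, by omega, fun i hi => ⟨fun h => ?_, fun h => h ▸ hdvd⟩⟩
  have h0 := Int.eq_zero_of_abs_lt_dvd (dvd_sub h hdvd) (by rw [abs_lt]; omega)
  omega

lemma existsUnique_of_iff_dvd {P : ℤ → Prop} (hk : 0 < k) {y : ℤ} (h : ∀ i, P i ↔ k ∣ i - y) :
    ∃! i, i ∈ Finset.Icc 1 k ∧ P i := by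
  obtain ⟨z, hz, hiff⟩ := exists_forall_dvd_sub_iff_eq hk y
  simp only [h]
  exact ⟨z, ⟨hz, (hiff z hz).2 rfl⟩, fun i hi => (hiff i hi.1).1 hi.2⟩

lemma dvd_two_mul_iff_of_odd (hodd : Odd k) {z : ℤ} : k ∣ 2 * z ↔ k ∣ z :=
  ⟨(Int.isCoprime_two_right.2 hodd).dvd_of_dvd_mul_left, fun h => h.mul_left 2⟩

lemma isPermutationPattern_of_odd (hk : 0 < k) (hodd : Odd k) (x : ℤ) :
    IsPermutationPattern k fun p q => k ∣ 2 * p + q - x where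
  row p _ _ := existsUnique_of_iff_dvd hk (y := x - 2 * p) fun q => by
    rw [show 2 * p + q - x = q - (x - 2 * p) by ring]
  col q _ _ := by
    obtain ⟨h, hh⟩ := id hodd
    refine existsUnique_of_iff_dvd hk (y := (h + 1) * (x - q)) fun p => ?_
    have hsplit : 2 * p + q - x = 2 * (p - (h + 1) * (x - q)) + k * (x - q) := by rw [hh]; ring
    rw [hsplit, dvd_add_left (dvd_mul_right _ _), dvd_two_mul_iff_of_odd hodd]

lemma existsUnique_dvd_or_dvd_of_even (hk : 0 < k) (heven : Even k) {y : ℤ} (hy : Odd y) :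
    ∃! q, q ∈ Finset.Icc 1 k ∧ (2 * k ∣ q - y ∨ 2 * k ∣ q - (y + k + 1)) := by
  obtain ⟨z, hz, hiff⟩ := exists_forall_dvd_sub_iff_eq (n := 2 * k) (by omega) y
  have hzodd : 2 ∣ z - y := (dvd_mul_right 2 k).trans ((hiff z hz).2 rfl)
  have hline : ∀ q, 1 ≤ q → q ≤ k →
      ((2 * k ∣ q - y ∨ 2 * k ∣ q - (y + k + 1)) ↔ q = z ∨ q + k - 1 = z) := fun q hq hqk => by
    rw [← hiff q (Finset.mem_Icc.2 (by omega)), ← hiff (q + k - 1) (Finset.mem_Icc.2 (by omega)),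
      show q - (y + k + 1) = q + k - 1 - y - 2 * k by ring, dvd_sub_self_right]
  rw [Finset.mem_Icc] at hz
  refine ⟨if z < k then z else z + 1 - k, ?_, ?_⟩
  · dsimp only
    rw [Finset.mem_Icc, hline _ (by grind) (by grind)]
    grind
  · rintro q ⟨hqk, hq⟩
    rw [Finset.mem_Icc] at hqk
    rw [hline q hqk.1 hqk.2] at hq
    grind

lemma isPermutationPattern_of_even (hk : 0 < k) (heven : Even k) {x : ℤ} (hx : Odd x) :
    IsPermutationPattern k
      fun p q => 2 * k ∣ 2 * p + q - x ∨ 2 * k ∣ 2 * p + q - (x + k + 1) where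
  row p _ _ := by
    have hy : Odd (x - 2 * p) := by grind
    convert existsUnique_dvd_or_dvd_of_even hk heven hy using 5 <;> ring
  col q _ _ := by
    have htwo : ∀ z, 2 * k ∣ z → 2 ∣ z := fun z => (dvd_mul_right 2 k).trans
    rcases Int.even_or_odd q with hq | hq
    · obtain ⟨w, hw⟩ : 2 ∣ x + k + 1 - q := by grind
      refine existsUnique_of_iff_dvd hk (y := w) fun p => ?_
      rw [or_iff_right fun h => by have := htwo _ h; grind,
        show 2 * p + q - (x + k + 1) = 2 * (p - w) by linarith,
        mul_dvd_mul_iff_left two_ne_zero]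
    · obtain ⟨w, hw⟩ : 2 ∣ x - q := by grind
      refine existsUnique_of_iff_dvd hk (y := w) fun p => ?_
      rw [or_iff_left fun h => by have := htwo _ h; grind,
        show 2 * p + q - x = 2 * (p - w) by linarith,
        mul_dvd_mul_iff_left two_ne_zero]

lemma not_dvd_of_abs_lt {n z : ℤ} (hz : z ≠ 0) (h : |z| < n) : ¬ n ∣ z :=
  fun hdvd => hz (Int.eq_zero_of_abs_lt_dvd hdvd h)

lemma exists_isPermutationPattern_of_odd (hodd : Odd k) {e : ℤ} (he : IsCoprime k e) (c : ℤ) {m : ℕ}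
    (hm : m < k) :
    ∃ T : Set ℤ, IsPermutationPattern k (fun p q => 2 * p + q ∈ T) ∧
      ∀ i : ℕ, i < m → c + e * i ∉ T := by
  refine ⟨{l | k ∣ l - (c - e)}, isPermutationPattern_of_odd (by omega) hodd _, fun i hi hdvd => ?_⟩
  rw [Set.mem_ofPred_eq, show c + e * i - (c - e) = e * (i + 1) by ring] at hdvd
  exact not_dvd_of_abs_lt (by omega) (abs_lt.2 (by omega)) (he.dvd_of_dvd_mul_left hdvd)

/-- Between the lines `x` and `x + k + 1` there is room for `k` consecutive lines, which settles
`e = 1`. For `e = 2` only one of the two classes has the parity of `c`. -/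
lemma exists_isPermutationPattern_of_even (heven : Even k) {e : ℤ} (he : e = 1 ∨ e = 2) (c : ℤ)
    {m : ℕ} (hm : m < k) :
    ∃ T : Set ℤ, IsPermutationPattern k (fun p q => 2 * p + q ∈ T) ∧
      ∀ i : ℕ, i < m → c + e * i ∉ T := by
  suffices h : ∃ x, Odd x ∧ ∀ i : ℕ, i < m →
      ¬ 2 * k ∣ c + e * i - x ∧ ¬ 2 * k ∣ c + e * i - (x + k + 1) by
    obtain ⟨x, hx, havoid⟩ := h
    exact ⟨{l | 2 * k ∣ l - x ∨ 2 * k ∣ l - (x + k + 1)},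
      isPermutationPattern_of_even (by omega) heven hx, fun i hi => not_or.2 (havoid i hi)⟩
  have hodd : ∀ z, Odd z → ¬ 2 * k ∣ z := fun z hz h => by
    have : 2 ∣ z := (dvd_mul_right 2 k).trans h
    grind
  have hsmall : ∀ z, z ≠ 0 → -(2 * k) < z → z < 2 * k → ¬ 2 * k ∣ z := fun z hz h h' =>
    not_dvd_of_abs_lt hz (abs_lt.2 ⟨h, h'⟩)
  rcases he with rfl | rfl <;> rcases Int.even_or_odd c with hc | hc
  · exact ⟨c - 1, by grind, fun i hi => ⟨hsmall _ (by omega) (by omega) (by omega),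
      hsmall _ (by omega) (by omega) (by omega)⟩⟩
  · exact ⟨c - 2, by grind, fun i hi => ⟨hsmall _ (by omega) (by omega) (by omega),
      hsmall _ (by omega) (by omega) (by omega)⟩⟩
  · exact ⟨c - 2 - (k + 1), by grind, fun i hi => ⟨hodd _ (by grind),
      hsmall _ (by omega) (by omega) (by omega)⟩⟩
  · exact ⟨c - 2, by grind, fun i hi => ⟨hsmall _ (by omega) (by omega) (by omega),
      hodd _ (by grind)⟩⟩

lemma exists_isPermutationPattern {e : ℤ} (he : e = 1 ∨ e = 2) (c : ℤ) {m : ℕ} (hm : m < k) :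
    ∃ T : Set ℤ, IsPermutationPattern k (fun p q => 2 * p + q ∈ T) ∧
      ∀ i : ℕ, i < m → c + e * i ∉ T := by
  rcases Int.even_or_odd k with heven | hodd
  · exact exists_isPermutationPattern_of_even heven he c hm
  · refine exists_isPermutationPattern_of_odd hodd ?_ c hm
    rcases he with rfl | rfl
    exacts [isCoprime_one_right, Int.isCoprime_two_right.2 hodd]

end PermutationPattern

section Substitution

variable {j k : ℤ} {S S' : Set ℤ}

lemma substNeg_X (S : Set ℤ) (i : ℤ) :
    substNeg S (X i) = if i ∈ S then (-1 : MvPolynomial ℤ ℤ) else X i :=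
  aeval_X _ i

lemma substNeg_X_ne_zero (S : Set ℤ) (i : ℤ) : substNeg S (X i) ≠ 0 := by
  rw [substNeg_X]
  split_ifs
  exacts [neg_ne_zero.2 one_ne_zero, X_ne_zero i]

lemma one_add_X_ne_zero (i : ℤ) : (1 + X i : MvPolynomial ℤ ℤ) ≠ 0 := fun h => by
  have := congrArg (eval fun _ => (0 : ℤ)) h
  simp at this

lemma substNeg_one_add_X_eq_zero_iff {i : ℤ} : substNeg S (1 + X i) = 0 ↔ i ∈ S := by
  rw [map_add, map_one, substNeg_X]
  split_ifs with hi
  · simp [hi]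
  · simp [hi, one_add_X_ne_zero i]

lemma substNeg_substNeg_of_subset (h : S ⊆ S') (F : MvPolynomial ℤ ℤ) :
    substNeg S' (substNeg S F) = substNeg S' F := by
  suffices hcomp : (substNeg S').comp (substNeg S) = substNeg S' from RingHom.congr_fun hcomp F
  refine ringHom_ext (fun r => by simp [substNeg]) fun i => ?_
  rw [RingHom.comp_apply, substNeg_X S]
  split_ifs with hi
  · rw [map_neg, map_one, substNeg_X, if_pos (h hi)]
  · rfl

lemma substNeg_ne_zero_of_subset (h : S ⊆ S') {F : MvPolynomial ℤ ℤ} (hF : substNeg S' F ≠ 0) :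
    substNeg S F ≠ 0 := fun hzero =>
  hF (by rw [← substNeg_substNeg_of_subset h, hzero, map_zero])

lemma label_coord_succ (j k p q c : ℤ) :
    3 * (coord (k + 1) p q c).1 + (coord (k + 1) p q c).2.1 + j =
      4 * p + 2 * q - 3 * k - 3 + j := by
  rw [coord]
  ring

lemma IsCornerSum.substNeg_prod_eq_zero_iff {C : ℤ → ℤ → ℤ} (hC : IsCornerSum k C) :
    substNeg S (∏ x ∈ pentagramAllowed k (cornerTrace k C) \ pentagramForced k (cornerTrace k C),
        (1 + X (3 * x.1 + x.2.1 + j))) = 0 ↔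
      ∃ p q, (1 ≤ p ∧ p ≤ k) ∧ (1 ≤ q ∧ q ≤ k) ∧ cornerEntry C p q = 1 ∧
        4 * p + 2 * q - 3 * k - 3 + j ∈ S := by
  rw [map_prod, Finset.prod_eq_zero_iff]
  simp only [substNeg_one_add_X_eq_zero_iff]
  constructor
  · rintro ⟨x, hx, hxS⟩
    obtain ⟨p, q, c, rfl⟩ := exists_eq_coord
      (mem_pentagramQFinset.1 (allowedSet_subset (Finset.mem_sdiff.1 hx).1))
    obtain ⟨hp, hq, hentry, -⟩ := hC.coord_mem_allowed_sdiff_forced_cornerTrace.1 hx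
    exact ⟨p, q, hp, hq, hentry, label_coord_succ j k p q c ▸ hxS⟩
  · rintro ⟨p, q, hp, hq, hentry, hS⟩
    exact ⟨coord (k + 1) p q (C p q),
      hC.coord_mem_allowed_sdiff_forced_cornerTrace.2 ⟨hp, hq, hentry, rfl⟩,
      (label_coord_succ j k p q _).symm ▸ hS⟩

theorem substNeg_pentagramF_ne_zero_of_isPermutationPattern
    (hS : IsPermutationPattern k fun p q => 4 * p + 2 * q - 3 * k - 3 + j ∉ S) :
    substNeg S (pentagramF j k) ≠ 0 := by
  obtain ⟨C, hC, hentry⟩ := hS.exists_isCornerSum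
  have hprod (s : Finset (ℤ × ℤ × ℤ)) : substNeg S (∏ x ∈ s, X (3 * x.1 + x.2.1 + j)) ≠ 0 := by
    rw [map_prod]
    exact Finset.prod_ne_zero_iff.2 fun x _ => substNeg_X_ne_zero S _
  rw [pentagramF_eq_sum, map_sum, Finset.sum_eq_single_of_mem (cornerTrace k C)]
  · rw [map_mul, map_mul]
    refine mul_ne_zero (hprod _) (mul_ne_zero (hprod _) (hC.substNeg_prod_eq_zero_iff.not.2 ?_))
    rintro ⟨p, q, hp, hq, hone, hpq⟩
    rw [hentry p q hp.1 hq.1, if_neg (not_not.2 hpq)] at hone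
    exact zero_ne_one hone
  · rw [Finset.mem_filter, Finset.mem_powerset]
    exact ⟨cornerTrace_subset, hC.isPentagramTrace_cornerTrace⟩
  · intro J hJ hne
    obtain ⟨C', hC', rfl⟩ := (Finset.mem_filter.1 hJ).2.exists_eq_cornerTrace
    obtain ⟨p, q, hp, hq, hlt⟩ := hC'.exists_cornerEntry_lt hC hne
    have hle := hC'.cornerEntry_le_one hp.1 hp.2 hq.1 hq.2
    rw [hentry p q hp.1 hq.1] at hlt
    have hpq : 4 * p + 2 * q - 3 * k - 3 + j ∈ S := by
      by_contra hnot
      rw [if_pos hnot] at hlt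
      omega
    rw [if_neg (not_not.2 hpq)] at hlt
    have hvanish := hC'.substNeg_prod_eq_zero_iff.2 ⟨p, q, hp, hq, by omega, hpq⟩
    rw [map_mul, map_mul, hvanish, mul_zero, mul_zero]

end Substitution

theorem stmt2_general (j k a d : ℤ) (hd : d = 2 ∨ d = 4) (m : ℕ) (hcard : (m : ℤ) < k) (S : Set ℤ)
    (hS : ∀ x ∈ S, 2 ∣ x - (j + k + 1) → ∃ i : ℕ, i < m ∧ x = a + d * i) :
    substNeg S (pentagramF j k) ≠ 0 := by
  obtain ⟨T, hT, havoid⟩ := exists_isPermutationPattern (e := d / 2) (by omega)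
    ((a + 3 * k + 3 - j) / 2) hcard
  -- The position `(p, q)` on the line `l = 2 * p + q` has label `2 * l - 3 * k - 3 + j`.
  let S' : Set ℤ := {x | 2 ∣ x - (j + k + 1) → (x + 3 * k + 3 - j) / 2 ∉ T}
  have hSS' : S ⊆ S' := fun x hx hpar => by
    obtain ⟨i, hi, rfl⟩ := hS x hx hpar
    have hline : (a + d * i + 3 * k + 3 - j) / 2 = (a + 3 * k + 3 - j) / 2 + d / 2 * i := by
      rcases hd with rfl | rfl <;> omega
    exact hline ▸ havoid i hi
  have hlabel : ∀ p q, 4 * p + 2 * q - 3 * k - 3 + j ∉ S' ↔ 2 * p + q ∈ T := fun p q => by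
    have hline : (4 * p + 2 * q - 3 * k - 3 + j + 3 * k + 3 - j) / 2 = 2 * p + q := by omega
    rw [Set.mem_ofPred_eq, hline, Classical.not_imp, not_not, and_iff_right (by omega)]
  refine substNeg_ne_zero_of_subset hSS' (substNeg_pentagramF_ne_zero_of_isPermutationPattern ?_)
  simpa only [hlabel] using hT

theorem stmt2 (j k : ℤ) (hk : 1 ≤ k) (a d : ℤ) (hd : d = 2 ∨ d = 4) (m : ℕ)
    (hcard : (m : ℤ) < k) (S : Set ℤ)
    (hS : S = (fun i : ℕ => a + d * i) '' {i : ℕ | i < m})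
    (hpar : ∀ x ∈ S, (2 : ℤ) ∣ (x - (j + k + 1))) :
    substNeg S (pentagramF j k) ≠ 0 := by
  refine stmt2_general j k a d hd m hcard S fun x hx _ => ?_
  obtain ⟨i, hi, rfl⟩ := hS ▸ hx
  exact ⟨i, hi, rfl⟩

end
end
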